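/- arXiv:math/0609697 — 2 statements merged into one kernel-verified Lean document; each statement's English description precedes it below -/
import Mathlib

section
/- Let P = (V_0,…,V_{n−1}) be an ordinary cyclic polygon as in the setup. If P is convex, then pattern (P2) does not occur: there is no m ∈ {2,…,n−2} such that θ_0 < 0; θ_1 > 0, …, θ_m > 0; and θ_{m+1} < 0. -/
/-!
The orientation of three points of the unit circle factors as
`4 sin ((b - a) / 2) sin ((c - b) / 2) sin ((c - a) / 2)` in their angles (`cr_Vtx`), so it vanishes
only if two of the points coincide.  If the polygon is convex, the midpoint of an edge is a frontier
point of the hull, and a supporting line there must contain the edge; hence all vertices lie weakly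
on one side of each edge (`cr_mul_nonneg_of_frontier`, `edge_one_side`).  Consecutive edges share the
triangle they span, so the side is the same for all edges: the vertices run around the circle
in one rotational direction.

If they run clockwise, then `V₁V₂V₃` is a clockwise triangle, impossible when `θ₁, θ₂ ∈ (0, π]`.
If they run counterclockwise, then `θ₀ < 0` puts every vertex on the minor arc cut off by the edge
`V₀V₁`, and `θ_{m+1} < 0` puts every vertex on the minor arc cut off by `V_{m+1}V_{m+2}`; two
different edges cannot both do this.  The second contradiction is reached by a sign analysis of
the half-angle vectors `(cos (σ i / 2), sin (σ i / 2))`.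
-/

open Real Set

/-- The vertex `V_i = (cos σ(i), sin σ(i))` on the unit circle. -/
noncomputable def Vtx (σ : ℕ → ℝ) (i : ℕ) : ℝ × ℝ := (Real.cos (σ i), Real.sin (σ i))

/-- The determinant `Δ_{a,b,c}`. -/
noncomputable def Det3 (σ : ℕ → ℝ) (a b c : ℕ) : ℝ :=
  Matrix.det !![1, Real.cos (σ a), Real.sin (σ a);
                1, Real.cos (σ b), Real.sin (σ b);
                1, Real.cos (σ c), Real.sin (σ c)]

/-- `i ⊕ 1`: equals `i+1` for `i ≤ n-2` and `0` for `i = n-1`. -/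
def oplus (n i : ℕ) : ℕ := if i + 1 < n then i + 1 else 0

/-- The polygon is ordinary: the vertices `V_0, …, V_{n-1}` are pairwise distinct. -/
def Ordinary (n : ℕ) (σ : ℕ → ℝ) : Prop :=
  ∀ i < n, ∀ j < n, Vtx σ i = Vtx σ j → i = j

/-- The polygon is convex: the union of its edges equals the topological boundary of the
convex hull of its vertex set. -/
def IsConvexPolygon (n : ℕ) (σ : ℕ → ℝ) : Prop :=
  (⋃ i ∈ Finset.range n, segment ℝ (Vtx σ i) (Vtx σ (i + 1))) =
    frontier (convexHull ℝ {p | ∃ i < n, p = Vtx σ i})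

/-- The points of `S` are strictly to one side of the segment `[P₀, P₁]`: the line through
the distinct points `P₀` and `P₁` is the boundary of an open half-plane containing `S`. -/
def StrictlyOneSide (P₀ P₁ : ℝ × ℝ) (S : Set (ℝ × ℝ)) : Prop :=
  P₀ ≠ P₁ ∧ ∃ a b c : ℝ, (a, b) ≠ (0, 0) ∧
    a * P₀.1 + b * P₀.2 = c ∧ a * P₁.1 + b * P₁.2 = c ∧
    ∀ Q ∈ S, a * Q.1 + b * Q.2 > c

/-- Twice the signed area of the triangle `P Q R`, positive when it is counterclockwise. -/
def cr (P Q R : ℝ × ℝ) : ℝ :=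
  (Q.1 - P.1) * (R.2 - P.2) - (Q.2 - P.2) * (R.1 - P.1)

lemma cr_rotate (P Q R : ℝ × ℝ) : cr P Q R = cr Q R P := by
  unfold cr; ring

lemma cr_Vtx (σ : ℕ → ℝ) (a b c : ℕ) :
    cr (Vtx σ a) (Vtx σ b) (Vtx σ c) =
      4 * sin ((σ b - σ a) / 2) * sin ((σ c - σ b) / 2) * sin ((σ c - σ a) / 2) := by
  have hc : ∀ x : ℝ, cos x = 2 * cos (x / 2) ^ 2 - 1 := fun x => by
    rw [← cos_two_mul]; congr 1; ring
  have hs : ∀ x : ℝ, sin x = 2 * sin (x / 2) * cos (x / 2) := fun x => by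
    rw [← sin_two_mul]; congr 1; ring
  simp only [cr, Vtx, sub_div, sin_sub]
  rw [hc (σ a), hc (σ b), hc (σ c), hs (σ a), hs (σ b), hs (σ c)]
  have ha := sin_sq_add_cos_sq (σ a / 2)
  have hb := sin_sq_add_cos_sq (σ b / 2)
  have hd := sin_sq_add_cos_sq (σ c / 2)
  generalize sin (σ a / 2) = p at *
  generalize cos (σ a / 2) = q at *
  generalize sin (σ b / 2) = r at *
  generalize cos (σ b / 2) = s at *
  generalize sin (σ c / 2) = t at *
  generalize cos (σ c / 2) = u at *
  grind

lemma sin_half_ne_zero {σ : ℕ → ℝ} {a b : ℕ} (h : Vtx σ a ≠ Vtx σ b) :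
    sin ((σ b - σ a) / 2) ≠ 0 := by
  intro h0
  obtain ⟨N, hN⟩ := sin_eq_zero_iff.1 h0
  apply h
  have : σ b = σ a + N * (2 * π) := by linarith
  simp [Vtx, this, cos_add_int_mul_two_pi, sin_add_int_mul_two_pi]

lemma cr_Vtx_ne_zero {σ : ℕ → ℝ} {a b c : ℕ} (hab : Vtx σ a ≠ Vtx σ b)
    (hbc : Vtx σ b ≠ Vtx σ c) (hac : Vtx σ a ≠ Vtx σ c) :
    cr (Vtx σ a) (Vtx σ b) (Vtx σ c) ≠ 0 := by
  rw [cr_Vtx]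
  have h1 := sin_half_ne_zero hab
  have h2 := sin_half_ne_zero hbc
  have h3 := sin_half_ne_zero hac
  positivity

lemma interior_convexHull_nonempty_of_cr {S : Set (ℝ × ℝ)} {P Q R : ℝ × ℝ} (hP : P ∈ S)
    (hQ : Q ∈ S) (hR : R ∈ S) (h : cr P Q R ≠ 0) : (interior (convexHull ℝ S)).Nonempty := by
  rw [interior_convexHull_nonempty_iff_affineSpan_eq_top,
    AffineSubspace.affineSpan_eq_top_iff_vectorSpan_eq_top_of_nonempty ℝ (ℝ × ℝ) (ℝ × ℝ)
      ⟨P, hP⟩, eq_top_iff]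
  intro v _
  have h1 := vsub_mem_vectorSpan ℝ hQ hP
  have h2 := vsub_mem_vectorSpan ℝ hR hP
  -- Cramer's rule in the basis `Q - P`, `R - P`.
  have h3 : v = ((v.1 * (R.2 - P.2) - v.2 * (R.1 - P.1)) / cr P Q R) • (Q -ᵥ P)
      + (((Q.1 - P.1) * v.2 - (Q.2 - P.2) * v.1) / cr P Q R) • (R -ᵥ P) := by
    ext
    · simp
      field_simp
      unfold cr; ring
    · simp
      field_simp
      unfold cr; ring
  rw [h3]
  exact Submodule.add_mem _ (Submodule.smul_mem _ _ h1) (Submodule.smul_mem _ _ h2)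

/-- If the midpoint of a segment between two points of a planar convex set with interior points is
a frontier point, the set lies on one side of the line through
them: a supporting functional at the midpoint takes equal values at both ends. -/
lemma cr_mul_nonneg_of_frontier {C : Set (ℝ × ℝ)} (hC : Convex ℝ C) (hi : (interior C).Nonempty)
    {P Q : ℝ × ℝ} (hP : P ∈ C) (hQ : Q ∈ C) (hPQ : P ≠ Q)
    (hM : midpoint ℝ P Q ∈ frontier C) {R S : ℝ × ℝ} (hR : R ∈ C) (hS : S ∈ C) :
    0 ≤ cr P Q R * cr P Q S := by
  obtain ⟨f, hf⟩ := geometric_hahn_banach_open_point hC.interior isOpen_interior hM.2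
  have hle : ∀ x ∈ C, f x ≤ f (midpoint ℝ P Q) := by
    intro x hx
    have hx' : x ∈ closure (interior C) := by
      rw [hC.closure_interior_eq_closure_of_nonempty_interior hi]
      exact subset_closure hx
    exact closure_minimal (fun y hy => (hf y hy).le)
      (isClosed_le f.continuous continuous_const) hx'
  have hform : ∀ x : ℝ × ℝ, f x = x.1 * f (1, 0) + x.2 * f (0, 1) := by
    intro x
    have : x = x.1 • ((1, 0) : ℝ × ℝ) + x.2 • ((0, 1) : ℝ × ℝ) := by ext <;> simp
    conv_lhs => rw [this]
    simp only [map_add, map_smul, smul_eq_mul]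
  obtain ⟨x0, hx0⟩ := hi
  have hlt := hf x0 hx0
  have hmid : f (midpoint ℝ P Q) = (f P + f Q) / 2 := by
    rw [midpoint_eq_smul_add, map_smul, map_add]
    simp; ring
  have hP' := hle P hP
  have hQ' := hle Q hQ
  have hR' := hle R hR
  have hS' := hle S hS
  rw [hmid] at hP' hQ' hR' hS' hlt
  have hPQf : f P = f Q := by linarith
  rw [hform P, hform Q] at hPQf hR' hS' hlt
  rw [hform R] at hR'
  rw [hform S] at hS'
  rw [hform x0] at hlt
  generalize f (1, 0) = a at *
  generalize f (0, 1) = b at *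
  have hd : 0 < (Q.1 - P.1) ^ 2 + (Q.2 - P.2) ^ 2 := by
    by_contra hcon
    apply hPQ
    ext
    · nlinarith [sq_nonneg (Q.1 - P.1), sq_nonneg (Q.2 - P.2)]
    · nlinarith [sq_nonneg (Q.1 - P.1), sq_nonneg (Q.2 - P.2)]
  -- `(a, b)` is `t / |Q - P| ^ 2` times the normal `(P.2 - Q.2, Q.1 - P.1)`.
  set t := b * (Q.1 - P.1) - a * (Q.2 - P.2) with ht
  have key : ∀ X : ℝ × ℝ, t * cr P Q X = ((Q.1 - P.1) ^ 2 + (Q.2 - P.2) ^ 2) *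
      (a * (X.1 - P.1) + b * (X.2 - P.2)) := by
    intro X
    have h0 : a * (Q.1 - P.1) + b * (Q.2 - P.2) = 0 := by linarith
    rw [ht, cr]
    linear_combination
      (-((Q.1 - P.1) * (X.1 - P.1) + (Q.2 - P.2) * (X.2 - P.2))) * h0
  have t0 : t ≠ 0 := by
    intro h0
    have := key x0
    rw [h0, zero_mul] at this
    rcases mul_eq_zero.1 this.symm with h | h
    · exact hd.ne' h
    · linarith
  have kR : t * cr P Q R ≤ 0 := by
    rw [key]; exact mul_nonpos_of_nonneg_of_nonpos hd.le (by linarith)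
  have kS : t * cr P Q S ≤ 0 := by
    rw [key]; exact mul_nonpos_of_nonneg_of_nonpos hd.le (by linarith)
  have := mul_nonneg_of_nonpos_of_nonpos kR kS
  have t2 : 0 < t ^ 2 := by positivity
  refine nonneg_of_mul_nonneg_right (a := t ^ 2) ?_ t2
  linarith

/-- The indices run up to `n`, the vertex `V_n` being `V_0`. -/
lemma Vtx_ne {n : ℕ} {σ : ℕ → ℝ} (hord : Ordinary n σ) (h0 : Vtx σ n = Vtx σ 0) {i j : ℕ}
    (hi : 1 ≤ i) (hij : i < j) (hj : j ≤ n) : Vtx σ i ≠ Vtx σ j := by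
  intro h
  rcases hj.lt_or_eq with hj | rfl
  · have := hord i (by omega) j hj h; omega
  · have := hord i (by omega) 0 (by omega) (h.trans h0); omega

lemma edge_one_side {n : ℕ} (hn : 3 ≤ n) {σ : ℕ → ℝ} (hord : Ordinary n σ)
    (hconv : IsConvexPolygon n σ) (h0 : Vtx σ n = Vtx σ 0) {i j k : ℕ}
    (hi : i < n) (hj : j ≤ n) (hk : k ≤ n) :
    0 ≤ cr (Vtx σ i) (Vtx σ (i + 1)) (Vtx σ j) * cr (Vtx σ i) (Vtx σ (i + 1)) (Vtx σ k) := by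
  have hmem : ∀ j ≤ n, Vtx σ j ∈ {p | ∃ i < n, p = Vtx σ i} := by
    intro j hj
    rcases hj.lt_or_eq with hj | rfl
    · exact ⟨j, hj, rfl⟩
    · exact ⟨0, by omega, h0⟩
  have hmem' := fun j hj => subset_convexHull ℝ _ (hmem j hj)
  refine cr_mul_nonneg_of_frontier (convex_convexHull ℝ _)
    (interior_convexHull_nonempty_of_cr (hmem 1 (by omega)) (hmem 2 (by omega))
      (hmem 3 hn) (cr_Vtx_ne_zero (Vtx_ne hord h0 (by omega) (by omega) (by omega))
        (Vtx_ne hord h0 (by omega) (by omega) (by omega))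
        (Vtx_ne hord h0 (by omega) (by omega) (by omega))))
    (hmem' i hi.le) (hmem' (i + 1) hi) ?_ ?_ (hmem' j hj) (hmem' k hk)
  · rcases Nat.eq_zero_or_pos i with rfl | h
    · intro h
      have := hord 0 (by omega) (0 + 1) (by omega) h
      omega
    · exact Vtx_ne hord h0 h (by omega) hi
  · rw [← hconv]
    simp only [Set.mem_iUnion]
    exact ⟨i, Finset.mem_range.2 hi, midpoint_mem_segment _ _⟩

theorem convex_not_pattern_P2
    (n : ℕ) (hn : 3 ≤ n) (σ : ℕ → ℝ) (hσ0 : σ 0 = 0)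
    (hθ : ∀ i < n, σ (i + 1) - σ i ∈ Set.Ioc (-π) π)
    (w : ℤ) (hw : σ n = 2 * π * w)
    (hord : Ordinary n σ) (hconv : IsConvexPolygon n σ) :
    ¬ ∃ m, 2 ≤ m ∧ m ≤ n - 2 ∧ σ (0 + 1) - σ 0 < 0 ∧
      (∀ i, 1 ≤ i → i ≤ m → 0 < σ (i + 1) - σ i) ∧
      σ (m + 1 + 1) - σ (m + 1) < 0 := by
  rintro ⟨m, hm2, hmn, hθ0, hpos, hneg⟩
  have hV0 : Vtx σ n = Vtx σ 0 := by
    have e : σ n = 0 + w * (2 * π) := by rw [hw]; ring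
    simp only [Vtx, hσ0, e, cos_add_int_mul_two_pi, sin_add_int_mul_two_pi]
  have side := fun {i j k : ℕ} => edge_one_side (i := i) (j := j) (k := k) hn hord hconv hV0
  have hne := fun {i j : ℕ} => Vtx_ne (i := i) (j := j) hord hV0
  have h123 : 0 < cr (Vtx σ 1) (Vtx σ 2) (Vtx σ 3) := by
    rw [cr_Vtx]
    have p1 := hpos 1 (by omega) (by omega)
    have p2 := hpos 2 (by omega) (by omega)
    have l1 := (hθ 1 (by omega)).2
    have l2 := (hθ 2 (by omega)).2
    norm_num at p1 p2 l1 l2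
    have s1 : 0 < sin ((σ 2 - σ 1) / 2) := sin_pos_of_pos_of_lt_pi (by linarith) (by linarith)
    have s2 : 0 < sin ((σ 3 - σ 2) / 2) := sin_pos_of_pos_of_lt_pi (by linarith) (by linarith)
    have s3 : 0 ≤ sin ((σ 3 - σ 1) / 2) :=
      sin_nonneg_of_nonneg_of_le_pi (by linarith) (by linarith)
    have s3' := sin_half_ne_zero (hne (i := 1) (j := 3) (by omega) (by omega) (by omega))
    positivity
  have hchain : ∀ i, 1 ≤ i → i + 2 ≤ n →
      0 < cr (Vtx σ i) (Vtx σ (i + 1)) (Vtx σ (i + 2)) := by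
    intro i hi
    induction i, hi using Nat.le_induction with
    | base => intro _; exact h123
    | succ i hi ih =>
      intro hin
      have h1 := ih (by omega)
      rw [cr_rotate] at h1
      have h2 := side (i := i + 1) (j := i) (k := i + 3) (by omega) (by omega) (by omega)
      exact lt_of_le_of_ne (nonneg_of_mul_nonneg_right h2 h1)
        (cr_Vtx_ne_zero (hne (by omega) (by omega) (by omega))
          (hne (by omega) (by omega) (by omega)) (hne (by omega) (by omega) (by omega))).symm
  have h01 : ∀ j, 2 ≤ j → j ≤ n → 0 ≤ cr (Vtx σ 0) (Vtx σ 1) (Vtx σ j) := by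
    intro j hj hjn
    have a1 := side (i := 1) (j := 3) (k := 0) (by omega) (by omega) (by omega)
    have a2 : 0 ≤ cr (Vtx σ 1) (Vtx σ 2) (Vtx σ 0) := nonneg_of_mul_nonneg_right a1 h123
    have a3 : cr (Vtx σ 1) (Vtx σ 2) (Vtx σ 0) ≠ 0 := by
      rw [← hV0]
      exact cr_Vtx_ne_zero (hne (by omega) (by omega) (by omega))
        (hne (by omega) (by omega) (by omega)) (hne (by omega) (by omega) (by omega))
    rw [← cr_rotate] at a2 a3
    exact nonneg_of_mul_nonneg_right
      (side (i := 0) (j := 2) (k := j) (by omega) (by omega) hjn) (lt_of_le_of_ne a2 a3.symm)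
  have hk : 0 < cr (Vtx σ 0) (Vtx σ 1) (Vtx σ (m + 1)) := by
    refine lt_of_le_of_ne (h01 _ (by omega) (by omega)) (Ne.symm ?_)
    rw [cr_rotate, ← hV0]
    exact cr_Vtx_ne_zero (hne (by omega) (by omega) (by omega))
        (hne (by omega) (by omega) (by omega)) (hne (by omega) (by omega) (by omega))
  have hl := h01 (m + 1 + 1) (by omega) (by omega)
  have hkl : 0 < cr (Vtx σ 1) (Vtx σ (m + 1)) (Vtx σ (m + 1 + 1)) := by
    have h1 := hchain m (by omega) (by omega)
    rw [cr_rotate] at h1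
    have h2 := nonneg_of_mul_nonneg_right
      (side (i := m + 1) (j := m) (k := 1) (by omega) (by omega) (by omega)) h1
    rw [← cr_rotate] at h2
    exact lt_of_le_of_ne h2 (cr_Vtx_ne_zero (hne (by omega) (by omega) (by omega))
        (hne (by omega) (by omega) (by omega)) (hne (by omega) (by omega) (by omega))).symm
  rw [cr_Vtx] at hk hl hkl
  have g0 := (hθ 0 (by omega)).1
  have gk := (hθ (m + 1) (by omega)).1
  simp only [zero_add, hσ0, sub_zero] at hθ0 g0 hk hl
  have r0 : sin (σ 1 / 2) < 0 := sin_neg_of_neg_of_neg_pi_lt (by linarith) (by linarith)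
  have c0 : 0 < cos (σ 1 / 2) := cos_pos_of_mem_Ioo ⟨by linarith, by linarith⟩
  have rk : sin ((σ (m + 1 + 1) - σ (m + 1)) / 2) < 0 :=
    sin_neg_of_neg_of_neg_pi_lt (by linarith) (by linarith)
  have ck : 0 < cos ((σ (m + 1 + 1) - σ (m + 1)) / 2) :=
    cos_pos_of_mem_Ioo ⟨by linarith, by linarith⟩
  -- With `V₀` at angle `0`, write `p = c y - s x` and `p' = c y' - s x'` for the half-angle sines
  -- of `V_{m+1}` and `V_{m+2}` seen from `V₁`.
  have ep : sin ((σ (m + 1) - σ 1) / 2) =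
      sin (σ (m + 1) / 2) * cos (σ 1 / 2) - cos (σ (m + 1) / 2) * sin (σ 1 / 2) := by
    rw [sub_div, sin_sub]
  have ep' : sin ((σ (m + 1 + 1) - σ 1) / 2) =
      sin (σ (m + 1 + 1) / 2) * cos (σ 1 / 2) - cos (σ (m + 1 + 1) / 2) * sin (σ 1 / 2) := by
    rw [sub_div, sin_sub]
  rw [sub_div (σ (m + 1 + 1)) (σ (m + 1)), cos_sub] at ck
  generalize sin ((σ (m + 1) - σ 1) / 2) = p at *
  generalize sin ((σ (m + 1 + 1) - σ 1) / 2) = p' at *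
  generalize sin ((σ (m + 1 + 1) - σ (m + 1)) / 2) = r at *
  generalize sin (σ (m + 1) / 2) = y at *
  generalize cos (σ (m + 1) / 2) = x at *
  generalize sin (σ (m + 1 + 1) / 2) = y' at *
  generalize cos (σ (m + 1 + 1) / 2) = x' at *
  generalize sin (σ 1 / 2) = s at *
  generalize cos (σ 1 / 2) = c at *
  have q1 : p * y < 0 := by
    by_contra! h
    nlinarith [mul_nonneg h (neg_pos.2 r0).le]
  have q2 : p' * y' ≤ 0 := by
    by_contra! h
    nlinarith [mul_pos h (neg_pos.2 r0)]
  have q3 : p * p' < 0 := by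
    by_contra! h
    nlinarith [mul_nonneg h (neg_pos.2 rk).le]
  -- The vectors `(x, y)` and `(x', y')` then lie in opposite closed quadrants, while `ck` says that
  -- their inner product is positive.
  rcases lt_trichotomy p 0 with hp | hp | hp
  · have hp' : 0 < p' := pos_of_mul_neg_right q3 hp.le
    have hy : 0 < y := pos_of_mul_neg_right q1 hp.le
    have hy' : y' ≤ 0 := nonpos_of_mul_nonpos_right q2 hp'
    have hx : x < 0 := by
      by_contra! h
      nlinarith [mul_pos hy c0, mul_nonneg h (neg_pos.2 r0).le]
    have hx' : 0 < x' := by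
      by_contra! h
      nlinarith [mul_nonneg (neg_nonneg.2 hy') c0.le,
        mul_nonneg (neg_nonneg.2 h) (neg_pos.2 r0).le]
    nlinarith [mul_pos hx' (neg_pos.2 hx), mul_nonneg (neg_nonneg.2 hy') hy.le]
  · simp [hp] at q1
  · have hp' : p' < 0 := neg_of_mul_neg_right q3 hp.le
    have hy : y < 0 := neg_of_mul_neg_right q1 hp.le
    have hy' : 0 ≤ y' := by
      by_contra! h
      nlinarith [mul_pos (neg_pos.2 hp') (neg_pos.2 h)]
    have hx : 0 < x := by
      by_contra! h
      nlinarith [mul_pos (neg_pos.2 hy) c0, mul_nonneg (neg_nonneg.2 h) (neg_pos.2 r0).le]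
    have hx' : x' < 0 := by
      by_contra! h
      nlinarith [mul_nonneg hy' c0.le, mul_nonneg h (neg_pos.2 r0).le]
    nlinarith [mul_pos hx (neg_pos.2 hx'), mul_nonneg hy' (neg_pos.2 hy).le]
end

section
/- Let P = (V_0,…,V_{n−1}) be an ordinary cyclic polygon as in the setup with n ≥ 4. If P is convex, then pattern (P3) does not occur: it is not the case that θ_0 < 0, θ_1 > 0, θ_2 < 0, and θ_3 > 0. -/
/-!
On the circle, the oriented area of `V_a V_b V_c` is
`2 sin((b-a)/2) sin((c-b)/2) sin((c-a)/2)`, so it vanishes only when two vertices coincide.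

If vertices `C`, `D` lay strictly on opposite sides of an edge `[A, B]`, the triangles `ABC` and
`ABD` would together cover a neighbourhood of the midpoint of `[A, B]`, so the midpoint would be
interior to the hull (`hull_one_side`). Hence in a convex polygon all other vertices lie strictly
on the same side of each edge, and this side is the same for consecutive edges, which share the
triangle `V_i V_{i+1} V_{i+2}`.

If all vertices lie to the right of the edges `0, …, 3`, then the edges `1` and `3` are both
positively oriented with central angle at most `π`, and the vertices to the right of such an edge
lie on its short arc. So `V_3, V_4` lie on the short arc of `[V_1, V_2]`, and `V_3` precedes `V_4`
there; this puts `V_1` to the left of `[V_3, V_4]`, a contradiction (`no_two_short`). If all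
vertices lie to the left, the mirror image of this argument applies to the edges `0` and `2`, which
are negatively oriented.
-/

open Real Set

/-- Twice the oriented area of the triangle `P Q R`; positive when `R` is to the left of the
directed line `P Q`. -/
noncomputable def area (P Q R : ℝ × ℝ) : ℝ :=
  (Q.1 - P.1) * (R.2 - P.2) - (Q.2 - P.2) * (R.1 - P.1)

/-- The barycentric coordinates of `p` are the ratios of the oriented areas to that of `A B C`. -/
lemma mem_of_area {K : Set (ℝ × ℝ)} (hK : Convex ℝ K) {A B C p : ℝ × ℝ}
    (hA : A ∈ K) (hB : B ∈ K) (hC : C ∈ K) (h : 0 < area A B C)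
    (h1 : 0 ≤ area p B C) (h2 : 0 ≤ area A p C) (h3 : 0 ≤ area A B p) : p ∈ K := by
  have hsum : area p B C + area A p C + area A B p = area A B C := by
    unfold area; ring
  have hp : p = (area p B C / area A B C) • A + (area A p C / area A B C) • B
      + (area A B p / area A B C) • C := by
    ext
    · simp only [Prod.fst_add, Prod.smul_fst, smul_eq_mul]
      field_simp
      unfold area; ring
    · simp only [Prod.snd_add, Prod.smul_snd, smul_eq_mul]
      field_simp
      unfold area; ring
  rw [hp]
  refine hK.sum_mem (t := (Finset.univ : Finset (Fin 3)))
    (w := ![area p B C / area A B C, area A p C / area A B C, area A B p / area A B C])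
    (z := ![A, B, C]) ?_ ?_ ?_ |> fun h => by simpa [Fin.sum_univ_three] using h
  · intro i _
    fin_cases i <;> simp <;> positivity
  · simp only [Fin.sum_univ_three, Matrix.cons_val]
    field_simp
    exact hsum
  · intro i _
    fin_cases i <;> simp [hA, hB, hC]

/-- If the midpoint of `[A, B]` is not interior to a convex set `K` containing `A` and `B`, then `K`
does not contain points strictly on both sides of the line `A B`. -/
lemma hull_one_side {K : Set (ℝ × ℝ)} (hK : Convex ℝ K) {A B C D : ℝ × ℝ}
    (hA : A ∈ K) (hB : B ∈ K) (hC : C ∈ K) (hD : D ∈ K)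
    (hM : midpoint ℝ A B ∉ interior K)
    (h1 : 0 < area A B C) (h2 : area A B D < 0) : False := by
  apply hM
  have hm : midpoint ℝ A B = ((A.1 + B.1) / 2, (A.2 + B.2) / 2) := by
    rw [midpoint_eq_smul_add]
    ext <;> simp <;> ring
  rw [hm, mem_interior_iff_mem_nhds]
  have cont : ∀ (X Y : ℝ × ℝ), Continuous (fun p => area p X Y) ∧
      Continuous (fun p => area X p Y) := by
    intro X Y
    unfold area
    constructor <;> fun_prop
  have e1 := (cont B C).1.continuousAt.eventually_const_lt
    (show 0 < area ((A.1 + B.1) / 2, (A.2 + B.2) / 2) B C by unfold area at *; linarith)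
  have e2 := (cont A C).2.continuousAt.eventually_const_lt
    (show 0 < area A ((A.1 + B.1) / 2, (A.2 + B.2) / 2) C by unfold area at *; linarith)
  have e3 := (cont A D).1.continuousAt.eventually_const_lt
    (show 0 < area ((A.1 + B.1) / 2, (A.2 + B.2) / 2) A D by unfold area at *; linarith)
  have e4 := (cont B D).2.continuousAt.eventually_const_lt
    (show 0 < area B ((A.1 + B.1) / 2, (A.2 + B.2) / 2) D by unfold area at *; linarith)
  filter_upwards [e1, e2, e3, e4] with p p1 p2 p3 p4
  rcases le_total 0 (area A B p) with hp | hp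
  · exact mem_of_area hK hA hB hC h1 p1.le p2.le hp
  · refine mem_of_area hK hB hA hD ?_ p3.le p4.le ?_
    · unfold area at *; linarith
    · unfold area at *; linarith

lemma area_circle (a b c : ℝ) :
    area (cos a, sin a) (cos b, sin b) (cos c, sin c)
      = 4 * sin ((b - a) / 2) * sin ((c - b) / 2) * sin ((c - a) / 2) := by
  obtain ⟨x, rfl⟩ : ∃ x, a = 2 * x := ⟨a / 2, by ring⟩
  obtain ⟨y, rfl⟩ : ∃ y, b = 2 * y := ⟨b / 2, by ring⟩
  obtain ⟨z, rfl⟩ : ∃ z, c = 2 * z := ⟨c / 2, by ring⟩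
  have e : ∀ u v : ℝ, (2 * u - 2 * v) / 2 = u - v := fun u v => by ring
  simp only [area, e, sin_sub, cos_two_mul, sin_two_mul]
  have hx := sin_sq_add_cos_sq x
  have hy := sin_sq_add_cos_sq y
  have hz := sin_sq_add_cos_sq z
  generalize sin x = s at *
  generalize cos x = t at *
  generalize sin y = p at *
  generalize cos y = q at *
  generalize sin z = m at *
  generalize cos z = k at *
  grind

lemma area_circle_ne {a b c : ℝ} (hab : (cos a, sin a) ≠ (cos b, sin b))
    (hbc : (cos b, sin b) ≠ (cos c, sin c)) (hac : (cos a, sin a) ≠ (cos c, sin c)) :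
    area (cos a, sin a) (cos b, sin b) (cos c, sin c) ≠ 0 := by
  have key : ∀ x y : ℝ, (cos x, sin x) ≠ (cos y, sin y) → sin ((y - x) / 2) ≠ 0 := by
    intro x y h h0
    apply h
    obtain ⟨k, hk⟩ := sin_eq_zero_iff.1 h0
    have : y = x + k * (2 * π) := by linarith
    rw [this, cos_add_int_mul_two_pi, sin_add_int_mul_two_pi]
  rw [area_circle]
  have := key _ _ hab
  have := key _ _ hbc
  have := key _ _ hac
  positivity

/-- A point strictly to the right of a positively oriented chord of angle at most `π` lies, up
to full turns, on the open arc from `a` to `b`. -/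
lemma exists_arc {a b c : ℝ} (h0 : 0 < b - a) (hb : b - a ≤ π)
    (h : area (cos a, sin a) (cos b, sin b) (cos c, sin c) < 0) :
    ∃ k : ℤ, a < c + k * (2 * π) ∧ c + k * (2 * π) < b := by
  have hπ := pi_pos
  obtain ⟨k, ⟨hk1, hk2⟩, -⟩ := existsUnique_add_zsmul_mem_Ico two_pi_pos c a
  rw [zsmul_eq_mul] at hk1 hk2
  refine ⟨k, ?_⟩
  rw [← cos_add_int_mul_two_pi c k, ← sin_add_int_mul_two_pi c k, area_circle] at h
  generalize c + k * (2 * π) = c' at *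
  have s1 : 0 < sin ((b - a) / 2) := sin_pos_of_pos_of_lt_pi (by linarith) (by linarith)
  have s2 : 0 ≤ sin ((c' - a) / 2) := sin_nonneg_of_nonneg_of_le_pi (by linarith) (by linarith)
  constructor
  · rcases hk1.lt_or_eq with h' | h'
    · exact h'
    · subst h'; simp at h
  · by_contra! hcb
    have s3 : 0 ≤ sin ((c' - b) / 2) := sin_nonneg_of_nonneg_of_le_pi (by linarith) (by linarith)
    have : 0 ≤ 4 * sin ((b - a) / 2) * sin ((c' - b) / 2) * sin ((c' - a) / 2) := by positivity
    linarith

/-- Of two positively oriented chords of angle at most `π`, if the second lies to the right of the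
first, then the starting point of the first does not lie to the right of the second. -/
lemma no_two_short {a b c d : ℝ} (h0 : 0 < b - a) (hb : b - a ≤ π) (h0' : 0 < d - c)
    (hd : d - c ≤ π)
    (h1 : area (cos a, sin a) (cos b, sin b) (cos c, sin c) < 0)
    (h2 : area (cos a, sin a) (cos b, sin b) (cos d, sin d) < 0)
    (h3 : area (cos c, sin c) (cos d, sin d) (cos a, sin a) < 0) : False := by
  have hπ := pi_pos
  obtain ⟨k, hk1, hk2⟩ := exists_arc h0 hb h1
  obtain ⟨m, hm1, hm2⟩ := exists_arc h0 hb h2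
  -- Both `d - c` and the difference of the shifted angles have size at most `π`, so the two shifts
  -- agree.
  have hkm : k = m := by
    have l1 : ((k - m : ℤ) : ℝ) < 1 := by push_cast; nlinarith
    have l2 : (-1 : ℝ) < ((k - m : ℤ) : ℝ) := by push_cast; nlinarith
    have l1' : k - m < 1 := by exact_mod_cast l1
    have l2' : -1 < k - m := by exact_mod_cast l2
    omega
  subst hkm
  rw [← cos_add_int_mul_two_pi c k, ← sin_add_int_mul_two_pi c k,
    ← cos_add_int_mul_two_pi d k, ← sin_add_int_mul_two_pi d k, area_circle] at h3
  have s1 : 0 < sin ((d + k * (2 * π) - (c + k * (2 * π))) / 2) :=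
    sin_pos_of_pos_of_lt_pi (by linarith) (by linarith)
  have s2 : sin ((a - (d + k * (2 * π))) / 2) < 0 :=
    sin_neg_of_neg_of_neg_pi_lt (by linarith) (by linarith)
  have s3 : sin ((a - (c + k * (2 * π))) / 2) < 0 :=
    sin_neg_of_neg_of_neg_pi_lt (by linarith) (by linarith)
  have := mul_pos (mul_pos four_pos s1) (mul_pos_of_neg_of_neg s2 s3)
  linarith

lemma area_neg (a b c : ℝ) :
    area (cos (-a), sin (-a)) (cos (-b), sin (-b)) (cos (-c), sin (-c))
      = - area (cos a, sin a) (cos b, sin b) (cos c, sin c) := by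
  simp only [area, cos_neg, sin_neg]; ring

lemma area_rot (P Q R : ℝ × ℝ) : area Q R P = area P Q R := by
  unfold area; ring

theorem convex_not_pattern_P3
    (n : ℕ) (hn : 4 ≤ n) (σ : ℕ → ℝ) (hσ0 : σ 0 = 0)
    (hθ : ∀ i < n, σ (i + 1) - σ i ∈ Set.Ioc (-π) π)
    (w : ℤ) (hw : σ n = 2 * π * w)
    (hord : Ordinary n σ) (hconv : IsConvexPolygon n σ) :
    ¬ (σ 1 - σ 0 < 0 ∧ 0 < σ 2 - σ 1 ∧ σ 3 - σ 2 < 0 ∧ 0 < σ 4 - σ 3) := by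
  rintro ⟨t0, t1, t2, t3⟩
  have hVn : Vtx σ n = Vtx σ 0 := by
    have : σ n = 0 + w * (2 * π) := by rw [hw]; ring
    simp only [Vtx]
    rw [this, cos_add_int_mul_two_pi, sin_add_int_mul_two_pi, hσ0]
  set K := convexHull ℝ {p | ∃ i < n, p = Vtx σ i} with hKdef
  have hK : Convex ℝ K := convex_convexHull ℝ _
  have hmem : ∀ i ≤ n, Vtx σ i ∈ K := by
    intro i hi
    apply subset_convexHull
    rcases hi.lt_or_eq with h | h
    · exact ⟨i, h, rfl⟩
    · exact ⟨0, by omega, by rw [h, hVn]⟩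
  have side : ∀ i < n, ∀ k ≤ n, ∀ l ≤ n, 0 < area (Vtx σ i) (Vtx σ (i + 1)) (Vtx σ k) →
      area (Vtx σ i) (Vtx σ (i + 1)) (Vtx σ l) < 0 → False := by
    intro i hi k hk l hl
    refine hull_one_side hK (hmem i hi.le) (hmem (i + 1) hi) (hmem k hk) (hmem l hl) ?_
    have : midpoint ℝ (Vtx σ i) (Vtx σ (i + 1)) ∈ frontier K := by
      rw [hKdef, ← hconv]
      simp only [Set.mem_iUnion]
      exact ⟨i, Finset.mem_range.2 hi, midpoint_mem_segment _ _⟩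
    exact this.2
  have dist : ∀ i < 5, ∀ j < 5, i < j → 0 < i ∨ j < 4 → Vtx σ i ≠ Vtx σ j := by
    intro i hi j hj hij h04 h
    by_cases hjn : j < n
    · have := hord i (by omega) j hjn h
      omega
    · -- Here `j = n = 4`, and `V_4 = V_0` differs from `V_i` because `0 < i`.
      have hjn' : j = n := by omega
      rw [hjn', hVn] at h
      have := hord i (by omega) 0 (by omega) h
      omega
  have ne : ∀ i j k : ℕ, i < j → j < k → k < 5 → 0 < i ∨ k < 4 →
      area (Vtx σ i) (Vtx σ j) (Vtx σ k) ≠ 0 := by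
    intro i j k hij hjk hk h
    exact area_circle_ne (dist i (by omega) j (by omega) hij (by omega))
      (dist j (by omega) k hk hjk (by omega)) (dist i (by omega) k hk (by omega) h)
  have r : ∀ i j k, area (Vtx σ j) (Vtx σ k) (Vtx σ i) = area (Vtx σ i) (Vtx σ j) (Vtx σ k) :=
    fun i j k => area_rot _ _ _
  have n012 := ne 0 1 2 (by omega) (by omega) (by omega) (by omega)
  have n013 := ne 0 1 3 (by omega) (by omega) (by omega) (by omega)
  have n023 := ne 0 2 3 (by omega) (by omega) (by omega) (by omega)
  have n123 := ne 1 2 3 (by omega) (by omega) (by omega) (by omega)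
  have n124 := ne 1 2 4 (by omega) (by omega) (by omega) (by omega)
  have n134 := ne 1 3 4 (by omega) (by omega) (by omega) (by omega)
  have n234 := ne 2 3 4 (by omega) (by omega) (by omega) (by omega)
  have T0 := hθ 0 (by omega)
  have T1 := hθ 1 (by omega)
  have T2 := hθ 2 (by omega)
  have T3 := hθ 3 (by omega)
  simp only [Set.mem_Ioc, zero_add, Nat.reduceAdd] at T0 T1 T2 T3
  rcases n123.lt_or_gt with h | h
  · have h124 : area (Vtx σ 1) (Vtx σ 2) (Vtx σ 4) < 0 := n124.lt_or_gt.resolve_right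
      fun h' => side 1 (by omega) 4 (by omega) 3 (by omega) h' h
    have h234 : area (Vtx σ 2) (Vtx σ 3) (Vtx σ 4) < 0 := n234.lt_or_gt.resolve_right
      fun h' => side 2 (by omega) 4 (by omega) 1 (by omega) h' (by rw [r]; exact h)
    have h134 : area (Vtx σ 1) (Vtx σ 3) (Vtx σ 4) < 0 := n134.lt_or_gt.resolve_right
      fun h' => side 3 (by omega) 1 (by omega) 2 (by omega) (by rw [r]; exact h')
        (by rw [r]; exact h234)
    exact no_two_short t1 T1.2 t3 T3.2 h h124 ((r 1 3 4).trans_lt h134)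
  · have h012 : 0 < area (Vtx σ 0) (Vtx σ 1) (Vtx σ 2) := n012.lt_or_gt.resolve_left
      fun h' => side 1 (by omega) 3 (by omega) 0 (by omega) h (by rw [r]; exact h')
    have h013 : 0 < area (Vtx σ 0) (Vtx σ 1) (Vtx σ 3) := n013.lt_or_gt.resolve_left
      fun h' => side 0 (by omega) 2 (by omega) 3 (by omega) h012 h'
    have h023 : 0 < area (Vtx σ 0) (Vtx σ 2) (Vtx σ 3) := n023.lt_or_gt.resolve_left
      fun h' => side 2 (by omega) 1 (by omega) 0 (by omega) (by rw [r]; exact h)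
        (by rw [r]; exact h')
    rw [← r] at h023
    refine no_two_short (a := -σ 0) (b := -σ 1) (c := -σ 2) (d := -σ 3) (by linarith)
      (by linarith) (by linarith) (by linarith) ?_ ?_ ?_ <;> rw [area_neg, neg_lt_zero]
    exacts [h012, h013, h023]
end
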